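/- arXiv:1907.00200 — 2 statements merged into one kernel-verified Lean document; each statement's English description precedes it below -/
import Mathlib

section
/- Finite-dimensional (finite-element matrix) form of the paper's duality principle: let A* = {(u,t) ∈ ℝⁿ × B : H(t)u = f} be the set of equilibrium pairs and define J(u,t) = (1/2)⟨f,u⟩ on A*. Then there exists (u₀,t₀) ∈ A* such that inf_{(u,t)∈A*} (1/2)⟨f,u⟩ = sup_{u∈ℝⁿ} inf_{t∈B} J₁(u,t) = inf_{t∈B} (1/2)⟨f, H(t)⁻¹ f⟩ = (1/2)⟨f,u₀⟩ = (1/2)⟨H(t₀)u₀, u₀⟩; in particular the primal infimum, the dual supremum and the complementary-energy infimum coincide and are attained. -/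
/-!
The proof exhibits a saddle point of `J₁(u,t) = -(1/2)⟨H(t)u,u⟩ + ⟨f,u⟩`. For fixed `t ∈ B` the
concave function `J₁(·,t)` has its maximum, the complementary energy
`φ(t) = (1/2)⟨f, H(t)⁻¹f⟩`, at the equilibrium `u = H(t)⁻¹f` (`energy_le`). Since `φ` is continuous
on the compact set `B`, it has a minimizer `t₀`; put `u₀ = H(t₀)⁻¹f`.

It remains to see that `t₀` minimizes `J₁(u₀,·)`, that is `⟨H(t)u₀,u₀⟩ ≤ ⟨H(t₀)u₀,u₀⟩` for `t ∈ B`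
(`work_le_of_minimizer`). Let `tₛ = t₀ + s(t - t₀)` and `uₛ = H(tₛ)⁻¹f` for `0 < s ≤ 1`. Then
`0 ≤ φ(tₛ) - φ(t₀) ≤ J₁(uₛ,tₛ) - J₁(uₛ,t₀) = -(s/2)⟨(H(t) - H(t₀))uₛ,uₛ⟩`,
where the second inequality is the maximum property at `t₀`. Dividing by `s` and letting `s → 0`
gives the claim, and all the extremal values equal `J₁(u₀,t₀) = (1/2)⟨f,u₀⟩`.
-/

open Matrix

/-- At a solution `v` of `A v = f`, with `A` symmetric positive semidefinite, the concave quadratic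
`u ↦ -(1/2)⟨Au,u⟩ + ⟨f,u⟩` has its maximum `(1/2)⟨f,v⟩`: the gap at `u` is
`(1/2)⟨A(u - v),u - v⟩`. -/
lemma energy_le {n : ℕ} {A : Matrix (Fin n) (Fin n) ℝ} (hA : A.IsSymm)
    (hpos : ∀ u : Fin n → ℝ, 0 ≤ A.mulVec u ⬝ᵥ u) {f v : Fin n → ℝ} (hv : A.mulVec v = f)
    (u : Fin n → ℝ) :
    -(1 / 2) * (A.mulVec u ⬝ᵥ u) + f ⬝ᵥ u ≤ (1 / 2) * (f ⬝ᵥ v) := by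
  have h := hpos (u - v)
  have hs : A.mulVec u ⬝ᵥ v = f ⬝ᵥ u := by
    rw [dotProduct_comm, dotProduct_mulVec, ← mulVec_transpose, hA.eq, hv]
  rw [mulVec_sub, sub_dotProduct, dotProduct_sub, dotProduct_sub, hv, hs] at h
  linarith

lemma isUnit_det_of_coercive {n : ℕ} {A : Matrix (Fin n) (Fin n) ℝ} {c : ℝ} (hc : 0 < c)
    (h : ∀ u : Fin n → ℝ, c * (u ⬝ᵥ u) ≤ A.mulVec u ⬝ᵥ u) : IsUnit A.det := by
  rw [isUnit_iff_ne_zero]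
  intro h0
  obtain ⟨v, hv, hAv⟩ := exists_mulVec_eq_zero_iff.mpr h0
  have h1 := h v
  rw [hAv, zero_dotProduct] at h1
  have h2 : 0 ≤ v ⬝ᵥ v := Finset.sum_nonneg fun i _ => mul_self_nonneg (v i)
  exact hv (dotProduct_self_eq_zero.mp (by nlinarith))

/-- Continuity of the equilibrium `t ↦ A(t)⁻¹ f` where `A` is continuous and invertible. -/
lemma continuousOn_inv_mulVec {X : Type*} [TopologicalSpace X] {n : ℕ} {s : Set X}
    {A : X → Matrix (Fin n) (Fin n) ℝ} (hA : Continuous A) (hu : ∀ x ∈ s, IsUnit (A x).det)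
    (f : Fin n → ℝ) : ContinuousOn (fun x => (A x)⁻¹.mulVec f) s := by
  have h1 : ContinuousOn (fun x => (A x).det⁻¹ • (A x).adjugate.mulVec f) s :=
    (hA.matrix_det.continuousOn.inv₀ fun x hx => (hu x hx).ne_zero).smul
      (hA.matrix_adjugate.matrix_mulVec continuous_const).continuousOn
  refine h1.congr fun x _ => ?_
  simp only [inv_def, Ring.inverse_eq_inv', smul_mulVec]

/-- First-order optimality in the design variable: if `t₀` minimizes the complementary energy, then
`t₀` maximizes `t ↦ ⟨H(t)u₀,u₀⟩` over `B`, where `u₀ = H(t₀)⁻¹f`. -/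
lemma work_le_of_minimizer {N n : ℕ} {B : Set (Fin N → ℝ)} (hBconv : Convex ℝ B)
    {H : (Fin N → ℝ) →ᵃ[ℝ] Matrix (Fin n) (Fin n) ℝ} (hH : Continuous H)
    (hsym : ∀ t ∈ B, (H t).IsSymm)
    (hpos : ∀ t ∈ B, ∀ u : Fin n → ℝ, 0 ≤ (H t).mulVec u ⬝ᵥ u)
    (hunit : ∀ t ∈ B, IsUnit (H t).det) {f : Fin n → ℝ} {t₀ : Fin N → ℝ} (ht₀ : t₀ ∈ B)
    (hmin : ∀ t ∈ B, f ⬝ᵥ (H t₀)⁻¹.mulVec f ≤ f ⬝ᵥ (H t)⁻¹.mulVec f)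
    {t : Fin N → ℝ} (ht : t ∈ B) :
    (H t).mulVec ((H t₀)⁻¹.mulVec f) ⬝ᵥ (H t₀)⁻¹.mulVec f
      ≤ (H t₀).mulVec ((H t₀)⁻¹.mulVec f) ⬝ᵥ (H t₀)⁻¹.mulVec f := by
  have hsolve : ∀ t ∈ B, (H t).mulVec ((H t)⁻¹.mulVec f) = f := fun t ht => by
    rw [mulVec_mulVec, mul_nonsing_inv _ (hunit t ht), one_mulVec]
  set p : ℝ → (Fin N → ℝ) := fun s => AffineMap.lineMap t₀ t s with hp
  have hpB : ∀ s ∈ Set.Icc (0 : ℝ) 1, p s ∈ B := fun s hs =>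
    hBconv.lineMap_mem ht₀ ht hs
  have hpc : Continuous p := AffineMap.lineMap_continuous
  have hp0 : p 0 = t₀ := AffineMap.lineMap_apply_zero _ _
  set w : ℝ → (Fin n → ℝ) := fun s => (H (p s))⁻¹.mulVec f with hw
  have hwc : ContinuousOn w (Set.Icc 0 1) :=
    continuousOn_inv_mulVec (hH.comp hpc) (fun s hs => hunit _ (hpB s hs)) f
  have hkey : ∀ s ∈ Set.Ioc (0 : ℝ) 1,
      (H t).mulVec (w s) ⬝ᵥ w s - (H t₀).mulVec (w s) ⬝ᵥ w s ≤ 0 := by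
    intro s hs
    have hsB := hpB s ⟨hs.1.le, hs.2⟩
    have h1 := energy_le (hsym t₀ ht₀) (hpos t₀ ht₀) (hsolve t₀ ht₀) (w s)
    have h2 := hmin _ hsB
    have h3 : (H (p s)).mulVec (w s) = f := hsolve _ hsB
    have h4 : H (p s) = H t₀ + s • (H t - H t₀) := by
      change H (AffineMap.lineMap t₀ t s) = _
      rw [AffineMap.apply_lineMap, AffineMap.lineMap_apply_module', add_comm]
    have h5 : f ⬝ᵥ w s = (H t₀).mulVec (w s) ⬝ᵥ w s
        + s * ((H t).mulVec (w s) ⬝ᵥ w s - (H t₀).mulVec (w s) ⬝ᵥ w s) := by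
      conv_lhs => rw [← h3, h4]
      rw [add_mulVec, smul_mulVec, sub_mulVec, add_dotProduct, smul_dotProduct, sub_dotProduct,
        smul_eq_mul]
    change f ⬝ᵥ (H t₀)⁻¹.mulVec f ≤ f ⬝ᵥ w s at h2
    have h6 : s * ((H t).mulVec (w s) ⬝ᵥ w s - (H t₀).mulVec (w s) ⬝ᵥ w s) ≤ 0 := by linarith
    exact nonpos_of_mul_nonpos_right h6 hs.1
  have hq : Continuous fun v : Fin n → ℝ => (H t).mulVec v ⬝ᵥ v - (H t₀).mulVec v ⬝ᵥ v := by
    fun_prop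
  have hlim : Filter.Tendsto (fun s => (H t).mulVec (w s) ⬝ᵥ w s - (H t₀).mulVec (w s) ⬝ᵥ w s)
      (nhdsWithin 0 (Set.Ioc 0 1)) (nhds ((H t).mulVec (w 0) ⬝ᵥ w 0 - (H t₀).mulVec (w 0) ⬝ᵥ w 0)) :=
    (hq.tendsto (w 0)).comp
      ((hwc 0 ⟨le_rfl, zero_le_one⟩).mono_left (nhdsWithin_mono _ Set.Ioc_subset_Icc_self))
  have : (nhdsWithin (0 : ℝ) (Set.Ioc 0 1)).NeBot := by
    rw [nhdsWithin_Ioc_eq_nhdsGT zero_lt_one]; infer_instance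
  have hfin := le_of_tendsto hlim (Filter.eventually_of_mem self_mem_nhdsWithin hkey)
  have hw0 : w 0 = (H t₀)⁻¹.mulVec f := by simp only [hw, hp0]
  rw [hw0] at hfin
  linarith

/-- **Finite-dimensional (finite-element matrix) form of the duality principle.**
`B ⊆ ℝ^N` is a nonempty compact convex design set, `H` an affine stiffness map,
symmetric and uniformly coercive on `B`, `f` the load vector.
`J₁(u,t) = -(1/2)⟨H(t)u,u⟩ + ⟨f,u⟩`.  There exists an equilibrium pair `(u₀,t₀)`
at which the primal infimum, the dual supremum and the complementary-energy
infimum coincide and are attained. -/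
theorem stmt_0 (N n : ℕ) (hN : 0 < N) (hn : 0 < n)
    (B : Set (Fin N → ℝ)) (hBne : B.Nonempty) (hBcomp : IsCompact B)
    (hBconv : Convex ℝ B)
    (H : (Fin N → ℝ) →ᵃ[ℝ] Matrix (Fin n) (Fin n) ℝ)
    (hsym : ∀ t ∈ B, (H t).IsSymm)
    (c : ℝ) (hc : 0 < c)
    (hcoer : ∀ t ∈ B, ∀ u : Fin n → ℝ, c * (u ⬝ᵥ u) ≤ (H t).mulVec u ⬝ᵥ u)
    (f : Fin n → ℝ) :
    ∃ (u₀ : Fin n → ℝ) (t₀ : Fin N → ℝ), t₀ ∈ B ∧ (H t₀).mulVec u₀ = f ∧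
      sInf {x : ℝ | ∃ u t, t ∈ B ∧ (H t).mulVec u = f ∧ x = (1 / 2) * (f ⬝ᵥ u)}
        = ⨆ u : Fin n → ℝ,
            sInf ((fun t => -(1 / 2) * ((H t).mulVec u ⬝ᵥ u) + f ⬝ᵥ u) '' B) ∧
      (⨆ u : Fin n → ℝ,
            sInf ((fun t => -(1 / 2) * ((H t).mulVec u ⬝ᵥ u) + f ⬝ᵥ u) '' B))
        = sInf ((fun t => (1 / 2) * (f ⬝ᵥ (H t)⁻¹.mulVec f)) '' B) ∧
      sInf ((fun t => (1 / 2) * (f ⬝ᵥ (H t)⁻¹.mulVec f)) '' B)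
        = (1 / 2) * (f ⬝ᵥ u₀) ∧
      (1 / 2) * (f ⬝ᵥ u₀) = (1 / 2) * ((H t₀).mulVec u₀ ⬝ᵥ u₀) := by
  have hH : Continuous H := by
    rw [H.decomp]
    exact H.linear.continuous_of_finiteDimensional.add continuous_const
  have hpos : ∀ t ∈ B, ∀ u : Fin n → ℝ, 0 ≤ (H t).mulVec u ⬝ᵥ u := fun t ht u =>
    (mul_nonneg hc.le (Finset.sum_nonneg fun i _ => mul_self_nonneg (u i))).trans (hcoer t ht u)
  have hunit : ∀ t ∈ B, IsUnit (H t).det := fun t ht => isUnit_det_of_coercive hc (hcoer t ht)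
  have hsolve : ∀ t ∈ B, (H t).mulVec ((H t)⁻¹.mulVec f) = f := fun t ht => by
    rw [mulVec_mulVec, mul_nonsing_inv _ (hunit t ht), one_mulVec]
  have hcont : ContinuousOn (fun t => f ⬝ᵥ (H t)⁻¹.mulVec f) B :=
    (show Continuous fun v : Fin n → ℝ => f ⬝ᵥ v by fun_prop).comp_continuousOn
      (continuousOn_inv_mulVec hH hunit f)
  obtain ⟨t₀, ht₀, hmin⟩ := hBcomp.exists_isMinOn hBne hcont
  have hmin' : ∀ t ∈ B, f ⬝ᵥ (H t₀)⁻¹.mulVec f ≤ f ⬝ᵥ (H t)⁻¹.mulVec f := fun t ht => hmin ht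
  have hwork := fun t (ht : t ∈ B) =>
    work_le_of_minimizer hBconv hH hsym hpos hunit ht₀ hmin' ht
  have hu₀ := hsolve t₀ ht₀
  set u₀ := (H t₀)⁻¹.mulVec f with hu₀def
  -- Each extremum is identified with the value `(1/2)⟨f,u₀⟩`.
  have hprimal : sInf {x : ℝ | ∃ u t, t ∈ B ∧ (H t).mulVec u = f ∧ x = (1 / 2) * (f ⬝ᵥ u)}
      = (1 / 2) * (f ⬝ᵥ u₀) := by
    refine IsLeast.csInf_eq ⟨⟨u₀, t₀, ht₀, hu₀, rfl⟩, ?_⟩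
    rintro x ⟨u, t, ht, hut, rfl⟩
    have hu : u = (H t)⁻¹.mulVec f := by
      rw [← hut, mulVec_mulVec, nonsing_inv_mul _ (hunit t ht), one_mulVec]
    have := hmin' t ht
    rw [hu]
    linarith
  have hcompl : sInf ((fun t => (1 / 2) * (f ⬝ᵥ (H t)⁻¹.mulVec f)) '' B)
      = (1 / 2) * (f ⬝ᵥ u₀) := by
    refine IsLeast.csInf_eq ⟨⟨t₀, ht₀, rfl⟩, ?_⟩
    rintro x ⟨t, ht, rfl⟩
    have := hmin' t ht
    change _ ≤ 1 / 2 * _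
    linarith
  have hupper : ∀ u : Fin n → ℝ,
      sInf ((fun t => -(1 / 2) * ((H t).mulVec u ⬝ᵥ u) + f ⬝ᵥ u) '' B)
        ≤ (1 / 2) * (f ⬝ᵥ u₀) := fun u => by
    have hbdd : BddBelow ((fun t => -(1 / 2) * ((H t).mulVec u ⬝ᵥ u) + f ⬝ᵥ u) '' B) := by
      refine (hBcomp.image (Continuous.add (continuous_const.mul ?_) continuous_const)).bddBelow
      exact (hH.matrix_mulVec continuous_const).dotProduct continuous_const
    exact (csInf_le hbdd ⟨t₀, ht₀, rfl⟩).trans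
      (energy_le (hsym t₀ ht₀) (hpos t₀ ht₀) hu₀ u)
  have hlower : (1 / 2) * (f ⬝ᵥ u₀)
      ≤ sInf ((fun t => -(1 / 2) * ((H t).mulVec u₀ ⬝ᵥ u₀) + f ⬝ᵥ u₀) '' B) := by
    refine le_csInf (hBne.image _) ?_
    rintro x ⟨t, ht, rfl⟩
    have := hwork t ht
    rw [hu₀] at this
    change 1 / 2 * (f ⬝ᵥ u₀) ≤ -(1 / 2) * ((H t).mulVec u₀ ⬝ᵥ u₀) + f ⬝ᵥ u₀
    linarith
  have hdual : (⨆ u : Fin n → ℝ,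
      sInf ((fun t => -(1 / 2) * ((H t).mulVec u ⬝ᵥ u) + f ⬝ᵥ u) '' B))
        = (1 / 2) * (f ⬝ᵥ u₀) :=
    le_antisymm (ciSup_le hupper)
      (hlower.trans (le_ciSup (f := fun u : Fin n → ℝ =>
        sInf ((fun t => -(1 / 2) * ((H t).mulVec u ⬝ᵥ u) + f ⬝ᵥ u) '' B))
        ⟨_, Set.forall_mem_range.mpr hupper⟩ u₀))
  exact ⟨u₀, t₀, ht₀, hu₀, hprimal.trans hdual.symm, hdual.trans hcompl.symm, hcompl, by rw [hu₀]⟩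
end

section
/- Minimax exchange and saddle point for the topology optimization Lagrangian: inf_{t∈B} sup_{u∈ℝⁿ} J₁(u,t) = sup_{u∈ℝⁿ} inf_{t∈B} J₁(u,t), and there exists a saddle point (u₀,t₀) ∈ ℝⁿ × B, i.e. J₁(u,t₀) ≤ J₁(u₀,t₀) ≤ J₁(u₀,t) for all u ∈ ℝⁿ and all t ∈ B. -/
/-!
The quadratic form is concave in `u` and affine in `t`, so Sion's minimax theorem applies as soon
as `u` is confined to a compact convex set. Coercivity makes that restriction harmless: by Young's
inequality `J₁(u,t) ≤ -(c/4)|u|² + |f|²/c`, so outside the ball `|u|² ≤ 4|f|²/c²` the Lagrangian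
is negative, while `J₁(0,t) = 0`. A saddle point on `ball × B` is therefore a saddle point on
`ℝⁿ × B`, and the exchange of `inf` and `sup` follows from its existence. The same Young bound and
the compactness of `B` ensure that the real-valued suprema and infima involved are genuine.
-/

open Matrix

/-- Positive semidefinite quadratic forms are convex. No symmetry is needed: for any bilinear form,
`a q(x) + b q(y) - q(a x + b y) = a b q(x - y)` when `a + b = 1`. -/
lemma convexOn_mulVec_dotProduct {n : ℕ} (A : Matrix (Fin n) (Fin n) ℝ)
    (hA : ∀ u : Fin n → ℝ, 0 ≤ A.mulVec u ⬝ᵥ u) :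
    ConvexOn ℝ Set.univ (fun u : Fin n → ℝ => A.mulVec u ⬝ᵥ u) := by
  refine ⟨convex_univ, fun x _ y _ a b ha hb hab => ?_⟩
  have h := mul_nonneg (mul_nonneg ha hb) (hA (x - y))
  obtain rfl : b = 1 - a := by linarith
  simp only [mulVec_add, mulVec_sub, mulVec_smul, add_dotProduct, dotProduct_add, sub_dotProduct,
    dotProduct_sub, smul_dotProduct, dotProduct_smul, smul_eq_mul] at h ⊢
  nlinarith

lemma convex_dotProduct_self_le {n : ℕ} (R : ℝ) : Convex ℝ {u : Fin n → ℝ | u ⬝ᵥ u ≤ R} := by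
  have h := (convexOn_mulVec_dotProduct (1 : Matrix (Fin n) (Fin n) ℝ) (fun u => by
    rw [one_mulVec]
    exact Finset.sum_nonneg fun i _ => mul_self_nonneg _)).convex_le R
  simpa using h

lemma isCompact_dotProduct_self_le {n : ℕ} (R : ℝ) :
    IsCompact {u : Fin n → ℝ | u ⬝ᵥ u ≤ R} := by
  refine (isCompact_Icc (a := fun _ : Fin n => -(R + 1)) (b := fun _ => R + 1)).of_isClosed_subset
    (isClosed_le (by fun_prop) continuous_const) fun u hu => ?_
  have key (i : Fin n) : u i * u i ≤ R :=
    (Finset.single_le_sum (f := fun i => u i * u i) (fun i _ => mul_self_nonneg _)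
      (Finset.mem_univ i)).trans hu
  exact ⟨fun i => by nlinarith [key i, sq_nonneg (u i + 1), sq_nonneg (u i)],
    fun i => by nlinarith [key i, sq_nonneg (u i - 1), sq_nonneg (u i)]⟩

/-- Young's inequality `⟨f, u⟩ ≤ (c/4)|u|² + |f|²/c`. -/
lemma dotProduct_le_young {n : ℕ} {c : ℝ} (hc : 0 < c) (f u : Fin n → ℝ) :
    f ⬝ᵥ u ≤ c / 4 * (u ⬝ᵥ u) + f ⬝ᵥ f / c := by
  simp only [dotProduct, Finset.mul_sum, Finset.sum_div, ← Finset.sum_add_distrib]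
  refine Finset.sum_le_sum fun i _ => ?_
  have h : c / 4 * (u i * u i) + f i * f i / c - f i * u i = (c / 2 * u i - f i) ^ 2 / c := by
    field_simp
    ring
  have : 0 ≤ (c / 2 * u i - f i) ^ 2 / c := by positivity
  linarith

/-- **Minimax exchange and saddle point for the topology optimization Lagrangian.**
With `J₁(u,t) = -(1/2)⟨H(t)u,u⟩ + ⟨f,u⟩`, one has
`inf_{t∈B} sup_u J₁ = sup_u inf_{t∈B} J₁`, and there exists a saddle point
`(u₀,t₀) ∈ ℝⁿ × B`. -/
theorem stmt_1 (N n : ℕ) (hN : 0 < N) (hn : 0 < n)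
    (B : Set (Fin N → ℝ)) (hBne : B.Nonempty) (hBcomp : IsCompact B)
    (hBconv : Convex ℝ B)
    (H : (Fin N → ℝ) →ᵃ[ℝ] Matrix (Fin n) (Fin n) ℝ)
    (hsym : ∀ t ∈ B, (H t).IsSymm)
    (c : ℝ) (hc : 0 < c)
    (hcoer : ∀ t ∈ B, ∀ u : Fin n → ℝ, c * (u ⬝ᵥ u) ≤ (H t).mulVec u ⬝ᵥ u)
    (f : Fin n → ℝ)
    (J₁ : (Fin n → ℝ) → (Fin N → ℝ) → ℝ)
    (hJ₁ : ∀ u t, J₁ u t = -(1 / 2) * ((H t).mulVec u ⬝ᵥ u) + f ⬝ᵥ u) :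
    sInf ((fun t => ⨆ u : Fin n → ℝ, J₁ u t) '' B)
      = (⨆ u : Fin n → ℝ, sInf ((fun t => J₁ u t) '' B)) ∧
    ∃ (u₀ : Fin n → ℝ) (t₀ : Fin N → ℝ), t₀ ∈ B ∧
      (∀ u : Fin n → ℝ, J₁ u t₀ ≤ J₁ u₀ t₀) ∧
      (∀ t ∈ B, J₁ u₀ t₀ ≤ J₁ u₀ t) := by
  have hbound : ∀ t ∈ B, ∀ u, J₁ u t ≤ -(c / 4) * (u ⬝ᵥ u) + f ⬝ᵥ f / c := by
    intro t ht u
    rw [hJ₁]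
    linarith [hcoer t ht u, dotProduct_le_young hc f u]
  have hself (u : Fin n → ℝ) : 0 ≤ u ⬝ᵥ u := Finset.sum_nonneg fun i _ => mul_self_nonneg _
  have hH : Continuous H := by
    rw [H.decomp]
    exact H.linear.continuous_of_finiteDimensional.add continuous_const
  have hcont_t (u : Fin n → ℝ) : Continuous fun t => J₁ u t := by
    simp only [hJ₁]
    fun_prop
  have hcont_u (t : Fin N → ℝ) : Continuous fun u => J₁ u t := by
    simp only [hJ₁]
    fun_prop
  have hzero (t) : J₁ 0 t = 0 := by simp [hJ₁]
  have hconvex_t (u : Fin n → ℝ) : ConvexOn ℝ B fun t => J₁ u t := by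
    refine ⟨hBconv, fun x _ y _ a b ha hb hab => le_of_eq ?_⟩
    obtain rfl : b = 1 - a := by linarith
    have h : H (a • x + (1 - a) • y) = a • H x + (1 - a) • H y :=
      Convex.combo_affine_apply hab
    simp only [hJ₁, h, add_mulVec, smul_mulVec, add_dotProduct, smul_dotProduct, smul_eq_mul]
    ring
  set R : ℝ := 4 * (f ⬝ᵥ f) / c ^ 2 with hR
  have hR0 : 0 ≤ R := by have := hself f; positivity
  have hconcave_u : ∀ t ∈ B, ConcaveOn ℝ {u : Fin n → ℝ | u ⬝ᵥ u ≤ R} fun u => J₁ u t := by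
    intro t ht
    have hq := (convexOn_mulVec_dotProduct (H t) fun u =>
      (mul_nonneg hc.le (hself u)).trans (hcoer t ht u)).subset
        (Set.subset_univ _) (convex_dotProduct_self_le R)
    refine ⟨convex_dotProduct_self_le R, fun x hx y hy a b ha hb hab => ?_⟩
    have h := hq.2 hx hy ha hb hab
    simp only [hJ₁, smul_eq_mul, dotProduct_add, dotProduct_smul] at h ⊢
    linarith
  obtain ⟨t₀, ht₀, u₀, hu₀, hs⟩ := Sion.exists_isSaddlePointOn (f := fun t u => J₁ u t)
    hBne hBconv hBcomp
    (fun u _ => (hcont_t u).lowerSemicontinuous.lowerSemicontinuousOn B)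
    (fun u _ => (hconvex_t u).quasiconvexOn)
    (convex_dotProduct_self_le R) ⟨0, by simpa using hR0⟩ (isCompact_dotProduct_self_le R)
    (fun t _ => (hcont_u t).upperSemicontinuous.upperSemicontinuousOn _)
    (fun t ht => (hconcave_u t ht).quasiconcaveOn)
  have hmin : ∀ t ∈ B, J₁ u₀ t₀ ≤ J₁ u₀ t := fun t ht => hs t ht u₀ hu₀
  have hmax (u : Fin n → ℝ) : J₁ u t₀ ≤ J₁ u₀ t₀ := by
    by_cases hu : u ⬝ᵥ u ≤ R
    · exact hs t₀ ht₀ u hu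
    · -- outside the ball, `J₁ u t₀ ≤ 0 = J₁ 0 t₀`, and `0` lies in the ball
      have h0 : J₁ 0 t₀ ≤ J₁ u₀ t₀ := hs t₀ ht₀ 0 (by simpa using hR0)
      have h1 := hbound t₀ ht₀ u
      have h2 : c / 4 * R = f ⬝ᵥ f / c := by rw [hR]; field_simp
      rw [hzero] at h0
      nlinarith
  refine ⟨?_, u₀, t₀, ht₀, hmax, hmin⟩
  have hbdd_u : ∀ t ∈ B, BddAbove (Set.range fun u => J₁ u t) := by
    rintro t ht
    refine ⟨f ⬝ᵥ f / c, ?_⟩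
    rintro _ ⟨u, rfl⟩
    exact (hbound t ht u).trans (by nlinarith [hself u])
  have hbdd_t (u : Fin n → ℝ) : BddBelow ((fun t => J₁ u t) '' B) :=
    (hBcomp.image (hcont_t u)).bddBelow
  have hle (u : Fin n → ℝ) : sInf ((fun t => J₁ u t) '' B) ≤ J₁ u₀ t₀ :=
    (csInf_le (hbdd_t u) ⟨t₀, ht₀, rfl⟩).trans (hmax u)
  -- both sides equal the saddle value `J₁ u₀ t₀`
  trans J₁ u₀ t₀
  · have hlb : ∀ y ∈ (fun t => ⨆ u : Fin n → ℝ, J₁ u t) '' B, J₁ u₀ t₀ ≤ y := by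
      rintro _ ⟨t, ht, rfl⟩
      exact (hmin t ht).trans (le_ciSup (hbdd_u t ht) u₀)
    exact le_antisymm ((csInf_le ⟨_, hlb⟩ ⟨t₀, ht₀, rfl⟩).trans (ciSup_le hmax))
      (le_csInf (hBne.image _) hlb)
  · have hlb : ∀ y ∈ (fun t => J₁ u₀ t) '' B, J₁ u₀ t₀ ≤ y := by
      rintro _ ⟨t, ht, rfl⟩
      exact hmin t ht
    have hbdd : BddAbove (Set.range fun u => sInf ((fun t => J₁ u t) '' B)) := by
      refine ⟨J₁ u₀ t₀, ?_⟩
      rintro _ ⟨u, rfl⟩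
      exact hle u
    exact le_antisymm ((le_csInf (hBne.image _) hlb).trans (le_ciSup hbdd u₀)) (ciSup_le hle)
end
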